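/- Fix an integer n ≥ 1. Let Ω ∈ τ_s(ℍ_s^n) be self-stem-preserving. Then (𝒫𝒮(Ω), +, *) is an associative unitary real algebra; explicitly, for all path-slice f, g, h : Ω → ℍ and a ∈ ℝ: (i) f + g and f*g are path-slice; (ii) (f*g)*h = f*(g*h); (iii) the constant function 1 satisfies 1*f = f*1 = f; (iv) f*(g + h) = f*g + f*h and (f + g)*h = f*h + g*h; (v) (a·f)*g = a·(f*g) = f*(a·g). -/

import Mathlib

open scoped ENNReal NNReal

noncomputable section

/-- The real quaternions. -/
abbrev ℍ := Quaternion ℝ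

/-- The set `𝕊` of imaginary units of the quaternions. -/
def QS : Set ℍ := {I | I ^ 2 = -1}

/-- `Ψ_i^I : ℂ^n → ℂ_I^n ⊆ ℍ^n`, sending `x + y i` to `x + y I` componentwise. -/
def PsiI (n : ℕ) (I : ℍ) (z : Fin n → ℂ) : Fin n → ℍ :=
  fun ℓ => algebraMap ℝ ℍ (z ℓ).re + (z ℓ).im • I

/-- The slice `ℂ_I^n = (ℝ + ℝ I)^n ⊆ ℍ^n`. -/
def sliceCn (n : ℕ) (I : ℍ) : Set (Fin n → ℍ) := Set.range (PsiI n I)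

/-- The weakly slice cone `ℍ_s^n = ⋃_{I ∈ 𝕊} ℂ_I^n`. -/
def weakSliceCone (n : ℕ) : Set (Fin n → ℍ) := ⋃ I ∈ QS, sliceCn n I

/-- `Ω` is slice open (i.e. `Ω ∈ τ_s(ℍ_s^n)`): `Ω ⊆ ℍ_s^n` and each slice
`Ω_I = Ω ∩ ℂ_I^n` is open in `ℂ_I^n`, encoded via the homeomorphism `Ψ_i^I`. -/
def sliceOpen (n : ℕ) (Ω : Set (Fin n → ℍ)) : Prop :=
  Ω ⊆ weakSliceCone n ∧ ∀ I ∈ QS, IsOpen (PsiI n I ⁻¹' Ω)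

/-- The set `𝒫(ℂ^n)` of continuous paths `[0,1] → ℂ^n` with real start point,
encoded as functions `ℝ → ℂ^n` continuous on `[0,1]`. -/
def PathsC (n : ℕ) : Set (ℝ → Fin n → ℂ) :=
  {γ | ContinuousOn γ (Set.Icc 0 1) ∧ ∀ ℓ, (γ 0 ℓ).im = 0}

/-- `γ^I([0,1]) ⊆ Ω`. -/
def pathInSlice (n : ℕ) (Ω : Set (Fin n → ℍ)) (I : ℍ) (γ : ℝ → Fin n → ℂ) : Prop :=
  ∀ t ∈ Set.Icc (0 : ℝ) 1, PsiI n I (γ t) ∈ Ω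

/-- The set `𝕊(Ω, γ) = {I ∈ 𝕊 : γ^I ⊆ Ω}`. -/
def sliceUnits (n : ℕ) (Ω : Set (Fin n → ℍ)) (γ : ℝ → Fin n → ℂ) : Set ℍ :=
  {I | I ∈ QS ∧ pathInSlice n Ω I γ}

/-- The set `𝒫(ℂ^n, Ω)`. -/
def PathsIn (n : ℕ) (Ω : Set (Fin n → ℍ)) : Set (ℝ → Fin n → ℂ) :=
  {γ | γ ∈ PathsC n ∧ ∃ I, I ∈ sliceUnits n Ω γ}

/-- The straight segment `𝓛_z^w(t) = (1 - t)z + tw`. -/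
def segPath (n : ℕ) (z w : Fin n → ℂ) : ℝ → Fin n → ℂ :=
  fun t => (1 - t) • z + t • w

/-- Concatenation of paths. -/
def concatP (n : ℕ) (γ δ : ℝ → Fin n → ℂ) : ℝ → Fin n → ℂ :=
  fun t => if t ≤ 1 / 2 then γ (2 * t) else δ (2 * t - 1)

/-- `𝓛_γ(z) := γ ∘ 𝓛_{γ(1)}^z`, the extension of `γ` by the segment from `γ(1)` to `z`. -/
def extendPath (n : ℕ) (γ : ℝ → Fin n → ℂ) (z : Fin n → ℂ) : ℝ → Fin n → ℂ :=
  concatP n γ (segPath n (γ 1) z)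

/-- The ball `B_{𝒫(ℂ^n)}(γ, r)` in path space. -/
def pathBall (n : ℕ) (γ : ℝ → Fin n → ℂ) (r : ℝ) : Set (ℝ → Fin n → ℂ) :=
  {β | ∃ z ∈ Metric.ball (γ 1) r, β = extendPath n γ z}

/-- `B_I(c^I, r) ⊆ Ω_I`, encoded via `Ψ_i^I`. -/
def ballInSlice (n : ℕ) (Ω : Set (Fin n → ℍ)) (I : ℍ) (c : Fin n → ℂ) (r : ℝ) : Prop :=
  ∀ w ∈ Metric.ball c r, PsiI n I w ∈ Ω

/-- `r_{γ,Ω}`, as an extended nonnegative real. -/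
def rPath (n : ℕ) (Ω : Set (Fin n → ℍ)) (γ : ℝ → Fin n → ℂ) : ℝ≥0∞ :=
  sSup {x : ℝ≥0∞ | ∃ r : ℝ≥0, x = r ∧ pathBall n γ r ⊆ PathsIn n Ω}

/-- `r^{𝕊'}_{γ,Ω}`, as an extended nonnegative real. -/
def rSliceSet (n : ℕ) (Ω : Set (Fin n → ℍ)) (γ : ℝ → Fin n → ℂ) (S' : Set ℍ) : ℝ≥0∞ :=
  sSup {x : ℝ≥0∞ | ∃ r : ℝ≥0, x = r ∧ ∀ I ∈ S', ballInSlice n Ω I (γ 1) r}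

/-- `r²_{γ,Ω}`, as an extended nonnegative real. -/
def r2Slice (n : ℕ) (Ω : Set (Fin n → ℍ)) (γ : ℝ → Fin n → ℂ) : ℝ≥0∞ :=
  sSup {x : ℝ≥0∞ | ∃ S'' : Set ℍ, S'' ⊆ sliceUnits n Ω γ ∧ S''.Nontrivial ∧ x = rSliceSet n Ω γ S''}

/-- `r^I_{γ,Ω}`, as an extended nonnegative real. -/
def rISlice (n : ℕ) (Ω : Set (Fin n → ℍ)) (γ : ℝ → Fin n → ℂ) (I : ℍ) : ℝ≥0∞ :=
  sSup {x : ℝ≥0∞ | ∃ r : ℝ≥0, x = r ∧ ballInSlice n Ω I (γ 1) r}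

/-- `Ω` is real-path-connected. -/
def realPathConnected (n : ℕ) (Ω : Set (Fin n → ℍ)) : Prop :=
  ∀ q ∈ Ω, ∃ γ ∈ PathsIn n Ω, ∃ I ∈ sliceUnits n Ω γ, PsiI n I (γ 1) = q

/-- `Ω₂` is `Ω₁`-stem-preserving. -/
def stemPreserving (n : ℕ) (Ω₁ Ω₂ : Set (Fin n → ℍ)) : Prop :=
  (∀ γ ∈ PathsIn n Ω₁, (sliceUnits n Ω₂ γ).Nontrivial) ∧
  (∀ α ∈ PathsIn n Ω₁, ∀ β ∈ PathsIn n Ω₁, α 1 = β 1 →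
    ¬ ∃ I, sliceUnits n Ω₂ α ∩ sliceUnits n Ω₂ β = {I})

/-- `F : 𝒫(ℂ^n, Ω) → ℍ^{2×1}` is a (path-slice) stem function of `f`:
`f(γ^I(1)) = (1, I)·F(γ)`. -/
def isStemOf (n : ℕ) (Ω : Set (Fin n → ℍ)) (f : (Fin n → ℍ) → ℍ)
    (F : (ℝ → Fin n → ℂ) → ℍ × ℍ) : Prop :=
  ∀ γ ∈ PathsIn n Ω, ∀ I ∈ sliceUnits n Ω γ, f (PsiI n I (γ 1)) = (F γ).1 + I * (F γ).2

/-- `f` is a path-slice function on `Ω`. -/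
def PathSliceFn (n : ℕ) (Ω : Set (Fin n → ℍ)) (f : (Fin n → ℍ) → ℍ) : Prop :=
  ∃ F, isStemOf n Ω f F

/-- `f` is (weakly) slice regular on `Ω`: each restriction `f_I` is real differentiable
and satisfies the Cauchy-Riemann equations `(∂/∂x_ℓ + I ∂/∂y_ℓ) f_I = 0`. -/
def SliceRegular (n : ℕ) (Ω : Set (Fin n → ℍ)) (f : (Fin n → ℍ) → ℍ) : Prop :=
  ∀ I ∈ QS,
    DifferentiableOn ℝ (fun z => f (PsiI n I z)) (PsiI n I ⁻¹' Ω) ∧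
    ∀ z ∈ PsiI n I ⁻¹' Ω, ∀ ℓ : Fin n,
      fderivWithin ℝ (fun z => f (PsiI n I z)) (PsiI n I ⁻¹' Ω) z (Pi.single ℓ 1)
        + I * fderivWithin ℝ (fun z => f (PsiI n I z)) (PsiI n I ⁻¹' Ω) z
            (Pi.single ℓ Complex.I) = 0

open Classical in
/-- `F_{Ω₁}^f` : a choice of stem function of the path-slice function `f : Ω₂ → ℍ`
(its restriction to `𝒫(ℂ^n, Ω₁)` is independent of the choice). -/
def stemF (n : ℕ) (Ω₂ : Set (Fin n → ℍ)) (f : (Fin n → ℍ) → ℍ) :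
    (ℝ → Fin n → ℂ) → ℍ × ℍ :=
  if h : ∃ F, isStemOf n Ω₂ f F then h.choose else fun _ => 0

open Classical in
/-- The map `ℑ : ℍ_s^n → 𝕊 ∪ {0}`. -/
def scrI {n : ℕ} (q : Fin n → ℍ) : ℍ :=
  if h : (Finset.univ.filter fun ℓ : Fin n => Quaternion.im (q ℓ) ≠ 0).Nonempty then
    ‖Quaternion.im (q ((Finset.univ.filter
        fun ℓ : Fin n => Quaternion.im (q ℓ) ≠ 0).min' h))‖⁻¹ •
      Quaternion.im (q ((Finset.univ.filter
        fun ℓ : Fin n => Quaternion.im (q ℓ) ≠ 0).min' h))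
  else 0

open Classical in
/-- The map `ℱ_{Ω₁}^g : Ω₁ → ℍ^{2×1}`. -/
def scrF (n : ℕ) (Ω₁ Ω₂ : Set (Fin n → ℍ)) (g : (Fin n → ℍ) → ℍ) (q : Fin n → ℍ) :
    ℍ × ℍ :=
  if h : (∃ ℓ, Quaternion.im (q ℓ) ≠ 0) ∧
      ∃ γ, γ ∈ PathsIn n Ω₁ ∧ pathInSlice n Ω₁ (scrI q) γ ∧ PsiI n (scrI q) (γ 1) = q then
    stemF n Ω₂ g h.2.choose
  else (g q, 0)

/-- The `*`-product `(f*g)(q) = (f(q), ℑ(q)f(q))·ℱ_{Ω₁}^g(q)`. -/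
def starProd (n : ℕ) (Ω₁ Ω₂ : Set (Fin n → ℍ)) (f g : (Fin n → ℍ) → ℍ) :
    (Fin n → ℍ) → ℍ :=
  fun q => f q * (scrF n Ω₁ Ω₂ g q).1 + scrI q * f q * (scrF n Ω₁ Ω₂ g q).2

/-- Componentwise complex conjugate of a path. -/
def conjPath (n : ℕ) (γ : ℝ → Fin n → ℂ) : ℝ → Fin n → ℂ :=
  fun t ℓ => starRingEnd ℂ (γ t ℓ)

end

/-! A stem value `p` acts on `ℍ` from the right, relative to an imaginary unit `I`, by
`x ↦ (x, I x) · p`. Since `I² = -1`, this is a right module structure over the algebra `ℍ ⊗ ℂ`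
of stem values. Two distinct units determine a stem value, so if `Ω` is stem-preserving, the
stem of `g` depends only on the end point of a path (along a common unit), and the `*`-product
at `γ^I(1)` becomes `f(γ^I(1))` acted on by the stem of `g` at `γ`. The algebra axioms are then
the module axioms. -/

section StemValues

variable {R : Type*} [Ring R]

/-- The pairing `(x, I x) · p` from the definition of the `*`-product; `x = 1` gives the
evaluation `(1, I) · p` of a stem value. -/
def stemEval (I x : R) (p : R × R) : R := x * p.1 + I * x * p.2

/-- The product of stem values, where `(a, b)` is read as `a + b i` in the complexification
`R ⊗ ℂ`, in which `i` is central. -/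
def stemMul (p q : R × R) : R × R := (p.1 * q.1 - p.2 * q.2, p.1 * q.2 + p.2 * q.1)

/-- The conjugate of a stem value, where `(a, b)` is read as `a + b i`. -/
def stemConj (p : R × R) : R × R := (p.1, -p.2)

lemma stemEval_one_left (I : R) (p : R × R) : stemEval I 1 p = p.1 + I * p.2 := by
  simp [stemEval]

lemma stemEval_one_right (I x : R) : stemEval I x (1, 0) = x := by simp [stemEval]

lemma stemEval_add_left (I x y : R) (p : R × R) :
    stemEval I (x + y) p = stemEval I x p + stemEval I y p := by
  simp only [stemEval]; noncomm_ring

lemma stemEval_add_right (I x : R) (p q : R × R) :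
    stemEval I x (p + q) = stemEval I x p + stemEval I x q := by
  simp only [stemEval, Prod.fst_add, Prod.snd_add]; noncomm_ring

lemma stemEval_smul_left {S : Type*} [CommSemiring S] [Algebra S R] (a : S) (I x : R)
    (p : R × R) : stemEval I (a • x) p = a • stemEval I x p := by
  simp only [stemEval, mul_smul_comm, smul_mul_assoc, smul_add]

lemma stemEval_smul_right {S : Type*} [CommSemiring S] [Algebra S R] (a : S) (I x : R)
    (p : R × R) : stemEval I x (a • p) = a • stemEval I x p := by
  simp only [stemEval, Prod.smul_fst, Prod.smul_snd, mul_smul_comm, smul_add]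

lemma stemEval_neg_stemConj (I x : R) (p : R × R) :
    stemEval (-I) x (stemConj p) = stemEval I x p := by
  simp [stemEval, stemConj]

lemma stemEval_stemEval {I : R} (hI : I * I = -1) (x : R) (p q : R × R) :
    stemEval I (stemEval I x p) q = stemEval I x (stemMul p q) := by
  have hII (y : R) : I * (I * y) = -y := by rw [← mul_assoc, hI, neg_one_mul]
  simp only [stemEval, stemMul, mul_add, add_mul, mul_sub, mul_assoc, hII, neg_mul]
  abel

lemma eq_of_stemEval_one_eq [NoZeroDivisors R] {I J : R} (hIJ : I ≠ J) {p q : R × R}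
    (hI : stemEval I 1 p = stemEval I 1 q) (hJ : stemEval J 1 p = stemEval J 1 q) : p = q := by
  simp only [stemEval_one_left] at hI hJ
  have hmul : (I - J) * (p.2 - q.2) = 0 := by
    calc (I - J) * (p.2 - q.2)
        = (p.1 + I * p.2) - (p.1 + J * p.2) - ((q.1 + I * q.2) - (q.1 + J * q.2)) := by
          noncomm_ring
      _ = 0 := by rw [hI, hJ, sub_self]
  have hsnd : p.2 = q.2 :=
    sub_eq_zero.1 ((mul_eq_zero.1 hmul).resolve_left (sub_ne_zero.2 hIJ))
  rw [hsnd] at hI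
  exact Prod.ext (add_right_cancel hI) hsnd

end StemValues

section ImaginaryUnits

variable {I : ℍ}

lemma mul_self_of_mem_QS (hI : I ∈ QS) : I * I = -1 := (sq I).symm.trans hI

lemma neg_mem_QS (hI : I ∈ QS) : -I ∈ QS := (neg_sq I).trans hI

lemma norm_of_mem_QS (hI : I ∈ QS) : ‖I‖ = 1 := by
  have hsq : ‖I‖ ^ 2 = 1 := by rw [← norm_pow, show I ^ 2 = -1 from hI, norm_neg, norm_one]
  exact (pow_eq_one_iff_of_nonneg (norm_nonneg I) two_ne_zero).1 hsq

lemma ne_zero_of_mem_QS (hI : I ∈ QS) : I ≠ 0 :=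
  norm_ne_zero_iff.1 (by rw [norm_of_mem_QS hI]; exact one_ne_zero)

lemma re_of_mem_QS (hI : I ∈ QS) : I.re = 0 := by
  have hnormSq : Quaternion.normSq I = 1 := by
    rw [Quaternion.normSq_eq_norm_mul_self, norm_of_mem_QS hI, mul_one]
  rw [← Quaternion.sq_eq_neg_normSq, hnormSq, Quaternion.coe_one]
  exact hI

end ImaginaryUnits

section Slices

variable {n : ℕ} {I : ℍ}

lemma im_PsiI (hI : I ∈ QS) (z : Fin n → ℂ) (ℓ : Fin n) :
    Quaternion.im (PsiI n I z ℓ) = (z ℓ).im • I := by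
  ext <;> simp [PsiI, re_of_mem_QS hI, Quaternion.algebraMap_def]

lemma re_PsiI (hI : I ∈ QS) (z : Fin n → ℂ) (ℓ : Fin n) :
    (PsiI n I z ℓ).re = (z ℓ).re := by
  simp [PsiI, re_of_mem_QS hI, Quaternion.algebraMap_def]

lemma PsiI_injective (hI : I ∈ QS) : Function.Injective (PsiI n I) := by
  intro z w hzw
  funext ℓ
  apply Complex.ext
  · rw [← re_PsiI hI, hzw, re_PsiI hI]
  · apply smul_left_injective ℝ (ne_zero_of_mem_QS hI)
    simp only [← im_PsiI hI, hzw]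

lemma exists_im_PsiI_ne_zero_iff (hI : I ∈ QS) {z : Fin n → ℂ} :
    (∃ ℓ, Quaternion.im (PsiI n I z ℓ) ≠ 0) ↔ ∃ ℓ, (z ℓ).im ≠ 0 := by
  simp only [im_PsiI hI, ne_eq, smul_eq_zero, ne_zero_of_mem_QS hI, or_false]

lemma PsiI_eq_PsiI_of_im_eq_zero (I J : ℍ) {z : Fin n → ℂ} (hz : ∀ ℓ, (z ℓ).im = 0) :
    PsiI n I z = PsiI n J z := by
  funext ℓ; simp [PsiI, hz]

lemma scrI_eq_zero {q : Fin n → ℍ} (hq : ¬ ∃ ℓ, Quaternion.im (q ℓ) ≠ 0) : scrI q = 0 := by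
  classical
  refine dif_neg ?_
  rintro ⟨ℓ, hℓ⟩
  exact hq ⟨ℓ, (Finset.mem_filter.1 hℓ).2⟩

lemma exists_scrI_eq {q : Fin n → ℍ} (hq : ∃ ℓ, Quaternion.im (q ℓ) ≠ 0) :
    ∃ ℓ, Quaternion.im (q ℓ) ≠ 0 ∧
      scrI q = ‖Quaternion.im (q ℓ)‖⁻¹ • Quaternion.im (q ℓ) := by
  classical
  obtain ⟨ℓ, hℓ⟩ := hq
  have hne : (Finset.univ.filter fun ℓ => Quaternion.im (q ℓ) ≠ 0).Nonempty :=
    ⟨ℓ, Finset.mem_filter.2 ⟨Finset.mem_univ ℓ, hℓ⟩⟩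
  refine ⟨_, (Finset.mem_filter.1 (Finset.min'_mem _ hne)).2, ?_⟩
  unfold scrI
  convert dif_pos hne

lemma scrI_PsiI_eq_or_eq_neg (hI : I ∈ QS) {z : Fin n → ℂ} (hz : ∃ ℓ, (z ℓ).im ≠ 0) :
    scrI (PsiI n I z) = I ∨ scrI (PsiI n I z) = -I := by
  obtain ⟨ℓ, hℓ, hscrI⟩ := exists_scrI_eq ((exists_im_PsiI_ne_zero_iff hI).2 hz)
  rw [im_PsiI hI] at hℓ hscrI
  have hy : (z ℓ).im ≠ 0 := left_ne_zero_of_smul hℓ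
  rw [norm_smul, norm_of_mem_QS hI, mul_one, smul_smul, Real.norm_eq_abs] at hscrI
  rcases abs_choice (z ℓ).im with habs | habs
  · left; rw [hscrI, habs, inv_mul_cancel₀ hy, one_smul]
  · right; rw [hscrI, habs, inv_neg, neg_mul, inv_mul_cancel₀ hy, neg_one_smul]

end Slices

section Paths

variable {n : ℕ} {Ω Ω₁ Ω₂ Ω₃ : Set (Fin n → ℍ)} {γ : ℝ → Fin n → ℂ} {I : ℍ}

lemma sliceUnits_mono (hΩ : Ω₁ ⊆ Ω₂) (γ : ℝ → Fin n → ℂ) :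
    sliceUnits n Ω₁ γ ⊆ sliceUnits n Ω₂ γ :=
  fun _ hI => ⟨hI.1, fun t ht => hΩ (hI.2 t ht)⟩

lemma PathsIn_mono (hΩ : Ω₁ ⊆ Ω₂) : PathsIn n Ω₁ ⊆ PathsIn n Ω₂ :=
  fun γ ⟨hγ, I, hI⟩ => ⟨hγ, I, sliceUnits_mono hΩ γ hI⟩

lemma stemPreserving.mono_left (hsp : stemPreserving n Ω₂ Ω₃) (hΩ : Ω₁ ⊆ Ω₂) :
    stemPreserving n Ω₁ Ω₃ :=
  ⟨fun γ hγ => hsp.1 γ (PathsIn_mono hΩ hγ),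
    fun α hα β hβ => hsp.2 α (PathsIn_mono hΩ hα) β (PathsIn_mono hΩ hβ)⟩

lemma PsiI_conjPath (I : ℍ) (γ : ℝ → Fin n → ℂ) (t : ℝ) :
    PsiI n I (conjPath n γ t) = PsiI n (-I) (γ t) := by
  funext ℓ
  simp [PsiI, conjPath]

lemma neg_mem_sliceUnits_conjPath (hI : I ∈ sliceUnits n Ω γ) :
    -I ∈ sliceUnits n Ω (conjPath n γ) :=
  ⟨neg_mem_QS hI.1, fun t ht => by rw [PsiI_conjPath, neg_neg]; exact hI.2 t ht⟩

lemma conjPath_mem_PathsIn (hγ : γ ∈ PathsIn n Ω) : conjPath n γ ∈ PathsIn n Ω := by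
  obtain ⟨⟨hcont, hreal⟩, I, hI⟩ := hγ
  refine ⟨⟨?_, fun ℓ => by simp [conjPath, hreal]⟩, -I, neg_mem_sliceUnits_conjPath hI⟩
  rw [continuousOn_pi] at hcont ⊢
  exact fun ℓ => Complex.continuous_conj.comp_continuousOn (hcont ℓ)

end Paths

section Stems

variable {n : ℕ} {Ω Ω₁ Ω₂ : Set (Fin n → ℍ)} {f g : (Fin n → ℍ) → ℍ}
  {F G G' : (ℝ → Fin n → ℂ) → ℍ × ℍ} {γ : ℝ → Fin n → ℂ} {I : ℍ}

lemma isStemOf.apply_PsiI (hF : isStemOf n Ω f F) (hγ : γ ∈ PathsIn n Ω)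
    (hI : I ∈ sliceUnits n Ω γ) : f (PsiI n I (γ 1)) = stemEval I 1 (F γ) := by
  rw [hF γ hγ I hI, stemEval_one_left]

lemma isStemOf_one : isStemOf n Ω (fun _ => 1) (fun _ => (1, 0)) :=
  fun _ _ _ _ => by simp

lemma isStemOf.add (hF : isStemOf n Ω f F) (hG : isStemOf n Ω g G) :
    isStemOf n Ω (fun q => f q + g q) (F + G) := by
  intro γ hγ I hI
  rw [← stemEval_one_left, Pi.add_apply, stemEval_add_right, ← hF.apply_PsiI hγ hI,
    ← hG.apply_PsiI hγ hI]

lemma isStemOf.const_smul (hF : isStemOf n Ω f F) (a : ℝ) :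
    isStemOf n Ω (fun q => a • f q) (a • F) := by
  intro γ hγ I hI
  rw [← stemEval_one_left, Pi.smul_apply, stemEval_smul_right, ← hF.apply_PsiI hγ hI]

lemma isStemOf_stemF (hf : PathSliceFn n Ω f) : isStemOf n Ω f (stemF n Ω f) := by
  have hex : ∃ F, isStemOf n Ω f F := hf
  rw [stemF, dif_pos hex]
  exact hex.choose_spec

lemma isStemOf.eq_of_endpoint_eq (hG : isStemOf n Ω₂ g G) (hG' : isStemOf n Ω₂ g G')
    (hΩ : Ω₁ ⊆ Ω₂) (hsp : stemPreserving n Ω₁ Ω₂) {α β : ℝ → Fin n → ℂ}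
    (hα : α ∈ PathsIn n Ω₁) (hβ : β ∈ PathsIn n Ω₁) (hαβ : α 1 = β 1)
    (hIα : I ∈ sliceUnits n Ω₂ α) (hIβ : I ∈ sliceUnits n Ω₂ β) : G α = G' β := by
  have heval : ∀ J ∈ sliceUnits n Ω₂ α ∩ sliceUnits n Ω₂ β,
      stemEval J 1 (G α) = stemEval J 1 (G' β) := fun J hJ => by
    rw [← hG.apply_PsiI (PathsIn_mono hΩ hα) hJ.1, hαβ,
      hG'.apply_PsiI (PathsIn_mono hΩ hβ) hJ.2]
  obtain ⟨J, hJ, hJI⟩ : ∃ J ∈ sliceUnits n Ω₂ α ∩ sliceUnits n Ω₂ β, J ≠ I := by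
    by_contra! hunique
    exact hsp.2 α hα β hβ hαβ
      ⟨I, Set.eq_singleton_iff_unique_mem.2 ⟨⟨hIα, hIβ⟩, hunique⟩⟩
  exact eq_of_stemEval_one_eq hJI (heval J hJ) (heval I ⟨hIα, hIβ⟩)

lemma isStemOf.apply_conjPath (hG : isStemOf n Ω g G) (hγ : γ ∈ PathsIn n Ω)
    (hunits : (sliceUnits n Ω γ).Nontrivial) : G (conjPath n γ) = stemConj (G γ) := by
  have heval : ∀ I ∈ sliceUnits n Ω γ,
      stemEval (-I) 1 (G (conjPath n γ)) = stemEval (-I) 1 (stemConj (G γ)) := fun I hI => by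
    rw [stemEval_neg_stemConj, ← hG.apply_PsiI hγ hI,
      ← hG.apply_PsiI (conjPath_mem_PathsIn hγ) (neg_mem_sliceUnits_conjPath hI),
      PsiI_conjPath, neg_neg]
  obtain ⟨I, hI, J, hJ, hIJ⟩ := hunits
  exact eq_of_stemEval_one_eq (neg_injective.ne hIJ) (heval I hI) (heval J hJ)

lemma isStemOf.apply_of_im_eq_zero (hG : isStemOf n Ω g G) (hγ : γ ∈ PathsIn n Ω)
    (hunits : (sliceUnits n Ω γ).Nontrivial) (hreal : ∀ ℓ, (γ 1 ℓ).im = 0) (I : ℍ) :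
    G γ = (g (PsiI n I (γ 1)), 0) := by
  have heval : ∀ J ∈ sliceUnits n Ω γ,
      stemEval J 1 (G γ) = stemEval J 1 (g (PsiI n I (γ 1)), 0) := fun J hJ => by
    rw [← hG.apply_PsiI hγ hJ, PsiI_eq_PsiI_of_im_eq_zero J I hreal, stemEval_one_left,
      mul_zero, add_zero]
  obtain ⟨J, hJ, K, hK, hJK⟩ := hunits
  exact eq_of_stemEval_one_eq hJK (heval J hJ) (heval K hK)

lemma isStemOf.scrF_eq (hG : isStemOf n Ω₂ g G) (hΩ : Ω₁ ⊆ Ω₂)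
    (hsp : stemPreserving n Ω₁ Ω₂) (hγ : γ ∈ PathsIn n Ω₁) {q : Fin n → ℍ}
    (hunit : scrI q ∈ sliceUnits n Ω₁ γ) (hend : PsiI n (scrI q) (γ 1) = q) :
    scrF n Ω₁ Ω₂ g q = G γ := by
  have hq : ∃ ℓ, Quaternion.im (q ℓ) ≠ 0 := by
    by_contra hreal
    exact ne_zero_of_mem_QS hunit.1 (scrI_eq_zero hreal)
  have hex : ∃ β, β ∈ PathsIn n Ω₁ ∧ pathInSlice n Ω₁ (scrI q) β ∧
      PsiI n (scrI q) (β 1) = q := ⟨γ, hγ, hunit.2, hend⟩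
  rw [scrF, dif_pos ⟨hq, hex⟩]
  obtain ⟨hβ, hβunit, hβend⟩ := hex.choose_spec
  exact (isStemOf_stemF ⟨G, hG⟩).eq_of_endpoint_eq hG hΩ hsp hβ hγ
    (PsiI_injective hunit.1 (hβend.trans hend.symm))
    (sliceUnits_mono hΩ _ ⟨hunit.1, hβunit⟩) (sliceUnits_mono hΩ _ hunit)

end Stems

section StarProduct

variable {n : ℕ} {Ω Ω₁ Ω₂ Ω₃ : Set (Fin n → ℍ)}

lemma starProd_apply (f g : (Fin n → ℍ) → ℍ) (q : Fin n → ℍ) :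
    starProd n Ω₁ Ω₂ f g q = stemEval (scrI q) (f q) (scrF n Ω₁ Ω₂ g q) := rfl

lemma isStemOf.starProd_PsiI {g : (Fin n → ℍ) → ℍ} {G : (ℝ → Fin n → ℂ) → ℍ × ℍ}
    (hG : isStemOf n Ω₂ g G) (hΩ : Ω₁ ⊆ Ω₂) (hsp : stemPreserving n Ω₁ Ω₂)
    (f : (Fin n → ℍ) → ℍ) {γ : ℝ → Fin n → ℂ} (hγ : γ ∈ PathsIn n Ω₁) {I : ℍ}
    (hI : I ∈ sliceUnits n Ω₁ γ) :
    starProd n Ω₁ Ω₂ f g (PsiI n I (γ 1)) = stemEval I (f (PsiI n I (γ 1))) (G γ) := by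
  have hγ₂ := PathsIn_mono hΩ hγ
  have hunits := hsp.1 γ hγ
  rw [starProd_apply]
  by_cases hz : ∃ ℓ, (γ 1 ℓ).im ≠ 0
  · rcases scrI_PsiI_eq_or_eq_neg hI.1 hz with hscrI | hscrI
    · rw [hG.scrF_eq hΩ hsp hγ (by rwa [hscrI]) (by rw [hscrI]), hscrI]
    · -- `ℑ` picks the opposite unit, along which the conjugate path leads to the same point.
      rw [hG.scrF_eq hΩ hsp (conjPath_mem_PathsIn hγ)
        (by rw [hscrI]; exact neg_mem_sliceUnits_conjPath hI)
        (by rw [hscrI, PsiI_conjPath, neg_neg]),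
        hscrI, hG.apply_conjPath hγ₂ hunits, stemEval_neg_stemConj]
  · have hq : ¬ ∃ ℓ, Quaternion.im (PsiI n I (γ 1) ℓ) ≠ 0 :=
      mt (exists_im_PsiI_ne_zero_iff hI.1).1 hz
    push Not at hz
    rw [hG.apply_of_im_eq_zero hγ₂ hunits hz I, scrF, dif_neg fun h => hq h.1]
    simp only [stemEval, mul_zero]

lemma isStemOf.starProd {f g : (Fin n → ℍ) → ℍ} {F G : (ℝ → Fin n → ℂ) → ℍ × ℍ}
    (hF : isStemOf n Ω₁ f F) (hG : isStemOf n Ω₂ g G) (hΩ : Ω₁ ⊆ Ω₂)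
    (hsp : stemPreserving n Ω₁ Ω₂) :
    isStemOf n Ω₁ (starProd n Ω₁ Ω₂ f g) (fun γ => stemMul (F γ) (G γ)) := by
  intro γ hγ I hI
  rw [hG.starProd_PsiI hΩ hsp f hγ hI, hF.apply_PsiI hγ hI,
    stemEval_stemEval (mul_self_of_mem_QS hI.1), stemEval_one_left]

lemma PathSliceFn.add {f g : (Fin n → ℍ) → ℍ} (hf : PathSliceFn n Ω f)
    (hg : PathSliceFn n Ω g) : PathSliceFn n Ω (fun q => f q + g q) :=
  let ⟨_, hF⟩ := hf
  let ⟨_, hG⟩ := hg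
  ⟨_, hF.add hG⟩

lemma PathSliceFn.starProd {f g : (Fin n → ℍ) → ℍ} (hf : PathSliceFn n Ω₁ f)
    (hg : PathSliceFn n Ω₂ g) (hΩ : Ω₁ ⊆ Ω₂) (hsp : stemPreserving n Ω₁ Ω₂) :
    PathSliceFn n Ω₁ (starProd n Ω₁ Ω₂ f g) :=
  let ⟨_, hF⟩ := hf
  let ⟨_, hG⟩ := hg
  ⟨_, hF.starProd hG hΩ hsp⟩

lemma starProd_add_left (f g h : (Fin n → ℍ) → ℍ) (q : Fin n → ℍ) :
    starProd n Ω₁ Ω₂ (fun p => f p + g p) h q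
      = starProd n Ω₁ Ω₂ f h q + starProd n Ω₁ Ω₂ g h q :=
  stemEval_add_left _ _ _ _

lemma starProd_smul_left (a : ℝ) (f g : (Fin n → ℍ) → ℍ) (q : Fin n → ℍ) :
    starProd n Ω₁ Ω₂ (fun p => a • f p) g q = a • starProd n Ω₁ Ω₂ f g q :=
  stemEval_smul_left _ _ _ _

variable {q : Fin n → ℍ}

lemma one_starProd {f : (Fin n → ℍ) → ℍ} (hf : PathSliceFn n Ω₂ f) (hΩ : Ω₁ ⊆ Ω₂)
    (hrc : realPathConnected n Ω₁) (hsp : stemPreserving n Ω₁ Ω₂) (hq : q ∈ Ω₁) :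
    starProd n Ω₁ Ω₂ (fun _ => 1) f q = f q := by
  obtain ⟨F, hF⟩ := hf
  obtain ⟨γ, hγ, I, hI, rfl⟩ := hrc q hq
  rw [hF.starProd_PsiI hΩ hsp _ hγ hI,
    hF.apply_PsiI (PathsIn_mono hΩ hγ) (sliceUnits_mono hΩ γ hI)]

lemma starProd_one (f : (Fin n → ℍ) → ℍ) (hΩ : Ω₁ ⊆ Ω₂) (hrc : realPathConnected n Ω₁)
    (hsp : stemPreserving n Ω₁ Ω₂) (hq : q ∈ Ω₁) :
    starProd n Ω₁ Ω₂ f (fun _ => 1) q = f q := by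
  obtain ⟨γ, hγ, I, hI, rfl⟩ := hrc q hq
  rw [isStemOf_one.starProd_PsiI hΩ hsp f hγ hI, stemEval_one_right]

lemma starProd_add_right (f : (Fin n → ℍ) → ℍ) {g h : (Fin n → ℍ) → ℍ}
    (hg : PathSliceFn n Ω₂ g) (hh : PathSliceFn n Ω₂ h) (hΩ : Ω₁ ⊆ Ω₂)
    (hrc : realPathConnected n Ω₁) (hsp : stemPreserving n Ω₁ Ω₂) (hq : q ∈ Ω₁) :
    starProd n Ω₁ Ω₂ f (fun p => g p + h p) q
      = starProd n Ω₁ Ω₂ f g q + starProd n Ω₁ Ω₂ f h q := by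
  obtain ⟨G, hG⟩ := hg
  obtain ⟨H, hH⟩ := hh
  obtain ⟨γ, hγ, I, hI, rfl⟩ := hrc q hq
  rw [(hG.add hH).starProd_PsiI hΩ hsp f hγ hI, hG.starProd_PsiI hΩ hsp f hγ hI,
    hH.starProd_PsiI hΩ hsp f hγ hI, Pi.add_apply, stemEval_add_right]

lemma starProd_smul_right (a : ℝ) (f : (Fin n → ℍ) → ℍ) {g : (Fin n → ℍ) → ℍ}
    (hg : PathSliceFn n Ω₂ g) (hΩ : Ω₁ ⊆ Ω₂) (hrc : realPathConnected n Ω₁)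
    (hsp : stemPreserving n Ω₁ Ω₂) (hq : q ∈ Ω₁) :
    starProd n Ω₁ Ω₂ f (fun p => a • g p) q = a • starProd n Ω₁ Ω₂ f g q := by
  obtain ⟨G, hG⟩ := hg
  obtain ⟨γ, hγ, I, hI, rfl⟩ := hrc q hq
  rw [(hG.const_smul a).starProd_PsiI hΩ hsp f hγ hI, hG.starProd_PsiI hΩ hsp f hγ hI,
    Pi.smul_apply, stemEval_smul_right]

lemma starProd_assoc (f : (Fin n → ℍ) → ℍ) {g h : (Fin n → ℍ) → ℍ}
    (hg : PathSliceFn n Ω₂ g) (hh : PathSliceFn n Ω₃ h) (hΩ₁₂ : Ω₁ ⊆ Ω₂) (hΩ₂₃ : Ω₂ ⊆ Ω₃)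
    (hrc : realPathConnected n Ω₁) (hsp₁₂ : stemPreserving n Ω₁ Ω₂)
    (hsp₂₃ : stemPreserving n Ω₂ Ω₃) (hq : q ∈ Ω₁) :
    starProd n Ω₁ Ω₃ (starProd n Ω₁ Ω₂ f g) h q
      = starProd n Ω₁ Ω₂ f (starProd n Ω₂ Ω₃ g h) q := by
  obtain ⟨G, hG⟩ := hg
  obtain ⟨H, hH⟩ := hh
  obtain ⟨γ, hγ, I, hI, rfl⟩ := hrc q hq
  rw [hH.starProd_PsiI (hΩ₁₂.trans hΩ₂₃) (hsp₂₃.mono_left hΩ₁₂) _ hγ hI,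
    hG.starProd_PsiI hΩ₁₂ hsp₁₂ f hγ hI,
    (hG.starProd hH hΩ₂₃ hsp₂₃).starProd_PsiI hΩ₁₂ hsp₁₂ f hγ hI,
    stemEval_stemEval (mul_self_of_mem_QS hI.1)]

end StarProduct

theorem statement9_general (n : ℕ) (Ω : Set (Fin n → ℍ))
    (hrc : realPathConnected n Ω) (hsp : stemPreserving n Ω Ω)
    (f g h : (Fin n → ℍ) → ℍ)
    (hf : PathSliceFn n Ω f) (hg : PathSliceFn n Ω g) (hh : PathSliceFn n Ω h)
    (a : ℝ) :
    PathSliceFn n Ω (fun q => f q + g q) ∧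
    PathSliceFn n Ω (starProd n Ω Ω f g) ∧
    (∀ q ∈ Ω, starProd n Ω Ω (starProd n Ω Ω f g) h q
        = starProd n Ω Ω f (starProd n Ω Ω g h) q) ∧
    (∀ q ∈ Ω, starProd n Ω Ω (fun _ => 1) f q = f q) ∧
    (∀ q ∈ Ω, starProd n Ω Ω f (fun _ => 1) q = f q) ∧
    (∀ q ∈ Ω, starProd n Ω Ω f (fun p => g p + h p) q
        = starProd n Ω Ω f g q + starProd n Ω Ω f h q) ∧
    (∀ q ∈ Ω, starProd n Ω Ω (fun p => f p + g p) h q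
        = starProd n Ω Ω f h q + starProd n Ω Ω g h q) ∧
    (∀ q ∈ Ω, starProd n Ω Ω (fun p => a • f p) g q = a • starProd n Ω Ω f g q) ∧
    (∀ q ∈ Ω, starProd n Ω Ω f (fun p => a • g p) q = a • starProd n Ω Ω f g q) :=
  ⟨hf.add hg, hf.starProd hg subset_rfl hsp,
    fun _ => starProd_assoc f hg hh subset_rfl subset_rfl hrc hsp hsp,
    fun _ => one_starProd hf subset_rfl hrc hsp,
    fun _ => starProd_one f subset_rfl hrc hsp,
    fun _ => starProd_add_right f hg hh subset_rfl hrc hsp,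
    fun q _ => starProd_add_left f g h q,
    fun q _ => starProd_smul_left a f g q,
    fun _ => starProd_smul_right a f hg subset_rfl hrc hsp⟩

theorem statement9 (n : ℕ) (hn : 1 ≤ n) (Ω : Set (Fin n → ℍ)) (hΩ : sliceOpen n Ω)
    (hrc : realPathConnected n Ω) (hsp : stemPreserving n Ω Ω)
    (f g h : (Fin n → ℍ) → ℍ)
    (hf : PathSliceFn n Ω f) (hg : PathSliceFn n Ω g) (hh : PathSliceFn n Ω h)
    (a : ℝ) :
    PathSliceFn n Ω (fun q => f q + g q) ∧
    PathSliceFn n Ω (starProd n Ω Ω f g) ∧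
    (∀ q ∈ Ω, starProd n Ω Ω (starProd n Ω Ω f g) h q
        = starProd n Ω Ω f (starProd n Ω Ω g h) q) ∧
    (∀ q ∈ Ω, starProd n Ω Ω (fun _ => 1) f q = f q) ∧
    (∀ q ∈ Ω, starProd n Ω Ω f (fun _ => 1) q = f q) ∧
    (∀ q ∈ Ω, starProd n Ω Ω f (fun p => g p + h p) q
        = starProd n Ω Ω f g q + starProd n Ω Ω f h q) ∧
    (∀ q ∈ Ω, starProd n Ω Ω (fun p => f p + g p) h q
        = starProd n Ω Ω f h q + starProd n Ω Ω g h q) ∧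
    (∀ q ∈ Ω, starProd n Ω Ω (fun p => a • f p) g q = a • starProd n Ω Ω f g q) ∧
    (∀ q ∈ Ω, starProd n Ω Ω f (fun p => a • g p) q = a • starProd n Ω Ω f g q) :=
  statement9_general n Ω hrc hsp f g h hf hg hh a
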